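/- Let F = F_{2^n} with n ≥ 5 odd, and let f: F → F be a function such that both x ↦ f(x)^3 + x^3 and x ↦ f(x)^5 + x^5 are additive (F_2-linear) maps. Then f(x) = x for all x ∈ F. -/

import Mathlib

/-!
Put `g x = f x ^ 3 + x ^ 3` and `h x = f x ^ 5 + x ^ 5`, so that
`(x ^ 3 + g x) * (x ^ 12 + g x ^ 4) = (x ^ 5 + h x) * (x ^ 10 + h x ^ 2)`, both sides being
`f x ^ 15`. Once the common term `x ^ 15` is cancelled, every remaining term is a product of at most
three additive functions. Polarizing in `(x, y, z)` therefore gives, for each `y` and `z`, a linear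
relation between `g`, `g ^ 4`, `h` and `h ^ 2` modulo the span of `x`, `x ^ 2`, `x ^ 4`, `x ^ 8`.
The coefficients of these relations are independent polynomials in `y` and `z`, so `g`, `g ^ 4`,
`h` and `h ^ 2` all lie in that span.

The equation has thus become an identity of polynomials of degree at most `20`, which the field is
large enough to detect. Comparing degrees shows that `x ^ 3 + g x` and `x ^ 5 + h x` are monic of
degrees `3` and `5`. The fifth power of the first is the cube of the second and both vanish at `0`,
so comparing the multiplicities of `0` as a root shows that they are `x ^ 3` and `x ^ 5`.
-/

open Cardinal Polynomial

theorem pow_dvd_of_pow_eq_pow_of_coprime {M : Type*} [CommMonoidWithZero M] [IsCancelMulZero M]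
    {p a b : M} {m n : ℕ} (hp : Prime p) (hmn : m.Coprime n) (h : a ^ n = b ^ m) (ha : p ∣ a) :
    p ^ m ∣ a := by
  by_cases hfin : FiniteMultiplicity p a
  · rcases eq_or_ne m 0 with rfl | hm
    · simp
    have hfin_pow : FiniteMultiplicity p (b ^ m) := h ▸ hfin.pow hp
    have hfin_b : FiniteMultiplicity p b :=
      hfin_pow.imp fun _ hnot hdvd ↦ hnot (hdvd.trans (dvd_pow_self b hm))
    have hmul : n * multiplicity p a = m * multiplicity p b := by
      rw [← hfin.multiplicity_pow hp, h, hfin_b.multiplicity_pow hp]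
    have hdvd : m ∣ multiplicity p a := hmn.dvd_of_dvd_mul_left ⟨_, hmul⟩
    exact pow_dvd_of_le_multiplicity (Nat.le_of_dvd (dvd_iff_multiplicity_pos.2 ha) hdvd)
  · exact FiniteMultiplicity.not_iff_forall.1 hfin m

theorem eq_X_pow_of_pow_eq_pow_of_coprime {R : Type*} [CommRing R] [IsDomain R] {P Q : R[X]}
    {m n : ℕ} (hP : P.Monic) (hdeg : P.natDegree = m) (hmn : m.Coprime n) (h : P ^ n = Q ^ m)
    (hP0 : P.coeff 0 = 0) : P = X ^ m :=
  eq_of_monic_of_dvd_of_natDegree_le (monic_X_pow m) hP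
    (pow_dvd_of_pow_eq_pow_of_coprime prime_X hmn h (X_dvd_iff.2 hP0)) (by simp [hdeg])

theorem eq_of_forall_eval_eq_of_natDegree_lt_card {R : Type*} [CommRing R] [IsDomain R]
    {P Q : R[X]} (hP : P.natDegree < #R) (hQ : Q.natDegree < #R)
    (h : ∀ x, P.eval x = Q.eval x) : P = Q := by
  refine sub_eq_zero.1 (eq_zero_of_forall_eval_zero_of_natDegree_lt_card _ (by simp [h]) ?_)
  rcases le_total P.natDegree Q.natDegree with hle | hle
  · exact (Nat.cast_le.2 (natDegree_sub_le_of_le hle le_rfl)).trans_lt (by simpa using hQ)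
  · exact (Nat.cast_le.2 (natDegree_sub_le_of_le le_rfl hle)).trans_lt (by simpa using hP)

section PowerSums

variable {F V ι κ : Type*} [Field F] [AddCommGroup V] [Module F V] [Fintype ι] [Fintype κ]

theorem eq_zero_of_forall_sum_pow_smul_eq_zero {e : ι → ℕ} (he : e.Injective)
    (hcard : ∀ i, e i < #F) {v : ι → V} (h : ∀ x : F, ∑ i, x ^ e i • v i = 0) : v = 0 := by
  classical
  funext j
  refine (Module.forall_dual_apply_eq_zero_iff F (v j)).1 fun φ ↦ ?_
  have hP : ∑ i, C (φ (v i)) * X ^ e i = 0 := by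
    obtain ⟨k, -, hk⟩ := Finset.exists_max_image Finset.univ e ⟨j, Finset.mem_univ j⟩
    have hdeg : (∑ i, C (φ (v i)) * X ^ e i).natDegree ≤ e k :=
      natDegree_sum_le_of_forall_le _ _ fun i hi ↦ (natDegree_C_mul_X_pow_le _ _).trans (hk i hi)
    refine eq_zero_of_forall_eval_zero_of_natDegree_lt_card _ (fun x ↦ ?_)
      ((Nat.cast_le.2 hdeg).trans_lt (hcard k))
    have hφ : ∑ i, x ^ e i * φ (v i) = 0 := by
      simpa only [map_sum, map_smul, smul_eq_mul, map_zero] using congr_arg φ (h x)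
    simpa only [eval_finsetSum, eval_mul, eval_C, eval_pow, eval_X, mul_comm] using hφ
  simpa only [finsetSum_coeff, coeff_C_mul, coeff_X_pow, he.eq_iff, mul_ite, mul_one, mul_zero,
    Finset.sum_ite_eq, Finset.mem_univ, if_true, coeff_zero] using congr_arg (coeff · (e j)) hP

theorem eq_zero_of_forall_sum_sum_pow_mul_pow_smul_eq_zero {e : ι → ℕ} {d : κ → ℕ}
    (he : e.Injective) (hd : d.Injective) (hecard : ∀ i, e i < #F) (hdcard : ∀ j, d j < #F)
    {v : ι → κ → V} (h : ∀ y z : F, ∑ i, ∑ j, (y ^ e i * z ^ d j) • v i j = 0) : v = 0 := by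
  funext i
  refine eq_zero_of_forall_sum_pow_smul_eq_zero hd hdcard fun z ↦ ?_
  exact congr_fun (eq_zero_of_forall_sum_pow_smul_eq_zero he hecard
    (v := fun i ↦ ∑ j, z ^ d j • v i j) fun y ↦ by simpa [Finset.smul_sum, mul_smul] using h y z) i

end PowerSums

theorem polarization_mem_span {A R : Type*} [AddZeroClass A] [CommRing R] (u : Fin 4 → A →+ R)
    {g k h l : A →+ R}
    (H : ∀ x, (u 0 x * u 1 x + g x) * (u 2 x * u 3 x + k x) =
      (u 0 x * u 2 x + h x) * (u 1 x * u 3 x + l x)) (y z : A) :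
    (u 2 y * u 3 z + u 3 y * u 2 z) • ⇑g + (u 0 y * u 1 z + u 1 y * u 0 z) • ⇑k
        - (u 1 y * u 3 z + u 3 y * u 1 z) • ⇑h - (u 0 y * u 2 z + u 2 y * u 0 z) • ⇑l ∈
      Submodule.span R (Set.range fun i ↦ ⇑(u i)) := by
  refine (Submodule.mem_span_range_iff_exists_fun R).2
    ⟨![u 2 y * l z + u 2 z * l y - u 1 y * k z - u 1 z * k y,
      u 3 y * h z + u 3 z * h y - u 0 y * k z - u 0 z * k y,
      u 0 y * l z + u 0 z * l y - u 3 y * g z - u 3 z * g y,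
      u 1 y * h z + u 1 z * h y - u 2 y * g z - u 2 z * g y], funext fun x ↦ ?_⟩
  have hxyz := H (x + y + z)
  have hxy := H (x + y)
  have hxz := H (x + z)
  have hyz := H (y + z)
  simp only [map_add] at hxyz hxy hxz hyz
  simp only [Finset.sum_apply, Pi.smul_apply, smul_eq_mul, Fin.sum_univ_four, Matrix.cons_val,
    Pi.sub_apply, Pi.add_apply]
  linear_combination -hxyz + hxy + hxz + hyz - H x - H y - H z

/-- The functions on `R` given by the linearized polynomials `∑ i < m, c i * X ^ q ^ i`. -/
def linearizedFunctions (R : Type*) [Semiring R] (q m : ℕ) : Submodule R (R → R) :=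
  Submodule.span R (Set.range fun (i : Fin m) x ↦ x ^ q ^ (i : ℕ))

theorem exists_eval_eq_of_mem_linearizedFunctions {R : Type*} [Semiring R] {q m : ℕ}
    {φ : R → R} (hφ : φ ∈ linearizedFunctions R q m) :
    ∃ P : R[X], (∀ x, P.eval x = φ x) ∧ ∀ n ∈ P.support, ∃ i < m, n = q ^ i := by
  obtain ⟨c, rfl⟩ := (Submodule.mem_span_range_iff_exists_fun R).1 hφ
  refine ⟨∑ i, C (c i) * X ^ q ^ (i : ℕ), fun x ↦ by simp [eval_finsetSum], fun n hn ↦ ?_⟩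
  contrapose! hn
  have hne (i : Fin m) : n ≠ q ^ (i : ℕ) := hn i i.2
  simp [finsetSum_coeff, coeff_X_pow, hne]

theorem exists_eval_eq_of_mem_linearizedFunctions_two_four {R : Type*} [Semiring R]
    {φ : R → R} (hφ : φ ∈ linearizedFunctions R 2 4) :
    ∃ P : R[X], (∀ x, P.eval x = φ x) ∧ P.natDegree ∈ ({0, 1, 2, 4, 8} : Finset ℕ) := by
  obtain ⟨P, hP, hsupp⟩ := exists_eval_eq_of_mem_linearizedFunctions hφ
  refine ⟨P, hP, ?_⟩
  rcases eq_or_ne P 0 with rfl | hP0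
  · simp
  · obtain ⟨i, hi, hdeg⟩ := hsupp _ (natDegree_mem_support_of_nonzero hP0)
    rw [hdeg]
    interval_cases i <;> simp

theorem natDegree_X_pow_add_of_ne {R : Type*} [Semiring R] [Nontrivial R] {n : ℕ} {P : R[X]}
    (h : P.natDegree ≠ n) : (X ^ n + P).natDegree = max n P.natDegree := by
  rcases h.lt_or_gt with hlt | hlt
  · rw [natDegree_add_eq_left_of_natDegree_lt (by simpa), natDegree_X_pow, max_eq_left hlt.le]
  · rw [natDegree_add_eq_right_of_natDegree_lt (by simpa), max_eq_right hlt.le]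

theorem natDegree_X_pow_add_mul_X_pow_add {R : Type*} [Semiring R] [Nontrivial R]
    [NoZeroDivisors R] {m n : ℕ} {P Q : R[X]} (hP : P.natDegree ≠ m) (hQ : Q.natDegree < n) :
    ((X ^ m + P) * (X ^ n + Q)).natDegree = max m P.natDegree + n := by
  have hdegP := natDegree_X_pow_add_of_ne hP
  have hdegQ := (natDegree_X_pow_add_of_ne hQ.ne).trans (max_eq_left hQ.le)
  rw [natDegree_mul (ne_zero_of_natDegree_gt (n := 0) (by lia))
    (ne_zero_of_natDegree_gt (n := 0) (by lia)), hdegP, hdegQ]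

theorem natDegree_lt_of_mul_eq_mul {R : Type*} [Semiring R] [Nontrivial R] [NoZeroDivisors R]
    {G K H L : R[X]} (hG : G.natDegree ∈ ({0, 1, 2, 4, 8} : Finset ℕ))
    (hH : H.natDegree ∈ ({0, 1, 2, 4, 8} : Finset ℕ))
    (hK : K.natDegree < 12) (hL : L.natDegree < 10)
    (h : (X ^ 3 + G) * (X ^ 12 + K) = (X ^ 5 + H) * (X ^ 10 + L)) :
    G.natDegree < 3 ∧ H.natDegree < 5 := by
  simp only [Finset.mem_insert, Finset.mem_singleton] at hG hH
  have hdeg : max 3 G.natDegree + 12 = max 5 H.natDegree + 10 := by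
    rw [← natDegree_X_pow_add_mul_X_pow_add (by lia) hK, h,
      natDegree_X_pow_add_mul_X_pow_add (by lia) hL]
  omega

section CharTwo

variable {F : Type*} [Field F] [CharP F 2]

theorem polarization_mem_linearizedFunctions {g k h l : F →+ F}
    (H : ∀ x, (x ^ 3 + g x) * (x ^ 12 + k x) = (x ^ 5 + h x) * (x ^ 10 + l x)) (y z : F) :
    (y ^ 4 * z ^ 8 + y ^ 8 * z ^ 4) • ⇑g + (y * z ^ 2 + y ^ 2 * z) • ⇑k
        - (y ^ 2 * z ^ 8 + y ^ 8 * z ^ 2) • ⇑h - (y * z ^ 4 + y ^ 4 * z) • ⇑l ∈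
      linearizedFunctions F 2 4 := by
  let u : Fin 4 → F →+ F := fun i ↦ iterateFrobenius F 2 i
  have hu₀ (x : F) : u 0 x = x := pow_one x
  have hu₁ (x : F) : u 1 x = x ^ 2 := rfl
  have hu₂ (x : F) : u 2 x = x ^ 4 := rfl
  have hu₃ (x : F) : u 3 x = x ^ 8 := rfl
  have hprod (x : F) : (u 0 x * u 1 x + g x) * (u 2 x * u 3 x + k x) =
      (u 0 x * u 2 x + h x) * (u 1 x * u 3 x + l x) := by
    rw [hu₀, hu₁, hu₂, hu₃]
    linear_combination H x
  have hspan : _ ∈ linearizedFunctions F 2 4 := polarization_mem_span u hprod y z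
  simpa only [hu₀, hu₁, hu₂, hu₃] using hspan

theorem mem_linearizedFunctions_of_mul_eq_mul (hF : 8 < #F) {g k h l : F →+ F}
    (H : ∀ x, (x ^ 3 + g x) * (x ^ 12 + k x) = (x ^ 5 + h x) * (x ^ 10 + l x)) :
    ⇑g ∈ linearizedFunctions F 2 4 ∧ ⇑k ∈ linearizedFunctions F 2 4 ∧
      ⇑h ∈ linearizedFunctions F 2 4 ∧ ⇑l ∈ linearizedFunctions F 2 4 := by
  let W := linearizedFunctions F 2 4
  -- `v i j` is the coefficient of `y ^ 2 ^ i * z ^ 2 ^ j` in the polarized relation modulo `W`.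
  let v : Fin 4 → Fin 4 → (F → F) ⧸ W :=
    ![![0, W.mkQ k, -W.mkQ l, 0], ![W.mkQ k, 0, 0, -W.mkQ h],
      ![-W.mkQ l, 0, 0, W.mkQ g], ![0, -W.mkQ h, W.mkQ g, 0]]
  have hinj : (fun i : Fin 4 ↦ 2 ^ (i : ℕ)).Injective :=
    (Nat.pow_right_injective le_rfl).comp Fin.val_injective
  have hcard (i : Fin 4) : ((2 ^ (i : ℕ) : ℕ) : Cardinal) < #F := by
    refine lt_of_le_of_lt ?_ hF
    exact_mod_cast Nat.pow_le_pow_right (n := 2) (by norm_num) (Nat.le_of_lt_succ i.2)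
  have hv : v = 0 := by
    refine eq_zero_of_forall_sum_sum_pow_mul_pow_smul_eq_zero hinj hinj hcard hcard fun y z ↦ ?_
    have hmk : W.mkQ _ = 0 :=
      (Submodule.Quotient.mk_eq_zero W).2 (polarization_mem_linearizedFunctions H y z)
    simp only [map_add, map_sub, map_smul] at hmk
    simp only [v, Fin.sum_univ_four, Matrix.cons_val, Fin.coe_ofNat_eq_mod, Nat.reduceMod,
      Nat.reducePow, pow_one, smul_zero, smul_neg, zero_add, add_zero]
    refine Eq.trans ?_ hmk
    module
  have hmem {φ : F → F} (hφ : W.mkQ φ = 0) : φ ∈ W := (Submodule.Quotient.mk_eq_zero W).1 hφ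
  exact ⟨hmem (congr_fun₂ hv 2 3), hmem (congr_fun₂ hv 0 1),
    hmem (neg_eq_zero.1 (congr_fun₂ hv 1 3)), hmem (neg_eq_zero.1 (congr_fun₂ hv 0 2))⟩

theorem exists_eval_eq_and_natDegree_lt_of_mul_eq_mul (hF : 20 < #F) {g k h l : F →+ F}
    (hghkl : ∀ x, (x ^ 3 + g x) * (x ^ 12 + k x) = (x ^ 5 + h x) * (x ^ 10 + l x)) :
    ∃ G H : F[X], (∀ x, G.eval x = g x) ∧ (∀ x, H.eval x = h x) ∧
      G.natDegree < 3 ∧ H.natDegree < 5 := by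
  obtain ⟨hgW, hkW, hhW, hlW⟩ :=
    mem_linearizedFunctions_of_mul_eq_mul (lt_trans (by norm_num) hF) hghkl
  obtain ⟨G, hG, hGdeg⟩ := exists_eval_eq_of_mem_linearizedFunctions_two_four hgW
  obtain ⟨K, hK, hKdeg⟩ := exists_eval_eq_of_mem_linearizedFunctions_two_four hkW
  obtain ⟨H, hH, hHdeg⟩ := exists_eval_eq_of_mem_linearizedFunctions_two_four hhW
  obtain ⟨L, hL, hLdeg⟩ := exists_eval_eq_of_mem_linearizedFunctions_two_four hlW
  have hle : ∀ d ∈ ({0, 1, 2, 4, 8} : Finset ℕ), d ≤ 8 := by decide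
  have hdeg {m n : ℕ} {P Q : F[X]} (hm : m ≤ 8) (hn : n ≤ 12) (hP : P.natDegree ≤ 8)
      (hQ : Q.natDegree ≤ 8) : (((X ^ m + P) * (X ^ n + Q)).natDegree : Cardinal) < #F := by
    refine lt_of_le_of_lt ?_ hF
    have hmul : ((X ^ m + P) * (X ^ n + Q)).natDegree ≤ 8 + 12 :=
      natDegree_mul_le_of_le (natDegree_add_le_of_degree_le (by simpa) hP)
        (natDegree_add_le_of_degree_le (by simpa) (by lia))
    exact_mod_cast hmul
  refine ⟨G, H, hG, hH, natDegree_lt_of_mul_eq_mul hGdeg hHdeg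
    ((hle _ hKdeg).trans_lt (by norm_num)) ((hle _ hLdeg).trans_lt (by norm_num)) ?_⟩
  refine eq_of_forall_eval_eq_of_natDegree_lt_card ?_ ?_ fun x ↦ ?_
  · exact hdeg (by norm_num) le_rfl (hle _ hGdeg) (hle _ hKdeg)
  · exact hdeg (by norm_num) (by norm_num) (hle _ hHdeg) (hle _ hLdeg)
  · simpa only [eval_mul, eval_add, eval_pow, eval_X, hG, hK, hH, hL] using hghkl x

theorem exists_eval_eq_and_natDegree_lt_of_pow_five_eq_pow_three (hF : 20 < #F) {g h : F →+ F}
    (hgh : ∀ x, (x ^ 3 + g x) ^ 5 = (x ^ 5 + h x) ^ 3) :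
    ∃ G H : F[X], (∀ x, G.eval x = g x) ∧ (∀ x, H.eval x = h x) ∧
      G.natDegree < 3 ∧ H.natDegree < 5 := by
  let k : F →+ F := (iterateFrobenius F 2 2 : F →+ F).comp g
  let l : F →+ F := (frobenius F 2 : F →+ F).comp h
  have hk (x : F) : x ^ 12 + k x = (x ^ 3 + g x) ^ 4 := by
    rw [show (x ^ 3 + g x) ^ 4 = (x ^ 3) ^ 4 + g x ^ 4 from add_pow_char_pow _ _ 2 2, ← pow_mul]
    rfl
  have hl (x : F) : x ^ 10 + l x = (x ^ 5 + h x) ^ 2 := by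
    rw [CharTwo.add_sq, ← pow_mul]
    rfl
  refine exists_eval_eq_and_natDegree_lt_of_mul_eq_mul (k := k) (l := l) hF fun x ↦ ?_
  rw [hk, hl]
  linear_combination hgh x

theorem eq_zero_of_pow_five_eq_pow_three (hF : 20 < #F) {g h : F →+ F}
    (hgh : ∀ x, (x ^ 3 + g x) ^ 5 = (x ^ 5 + h x) ^ 3) : g = 0 ∧ h = 0 := by
  obtain ⟨G, H, hG, hH, hG3, hH5⟩ :=
    exists_eval_eq_and_natDegree_lt_of_pow_five_eq_pow_three hF hgh
  have hA : (X ^ 3 + G).Monic :=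
    monic_X_pow_add (degree_le_natDegree.trans_lt (Nat.cast_lt.2 hG3))
  have hB : (X ^ 5 + H).Monic :=
    monic_X_pow_add (degree_le_natDegree.trans_lt (Nat.cast_lt.2 hH5))
  have hAdeg : (X ^ 3 + G).natDegree = 3 :=
    (natDegree_X_pow_add_of_ne hG3.ne).trans (max_eq_left hG3.le)
  have hBdeg : (X ^ 5 + H).natDegree = 5 :=
    (natDegree_X_pow_add_of_ne hH5.ne).trans (max_eq_left hH5.le)
  have hcard : ((15 : ℕ) : Cardinal) < #F := lt_trans (by norm_num) hF
  have hAB : (X ^ 3 + G) ^ 5 = (X ^ 5 + H) ^ 3 := by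
    refine eq_of_forall_eval_eq_of_natDegree_lt_card ?_ ?_ fun x ↦ ?_
    · rwa [natDegree_pow, hAdeg]
    · rwa [natDegree_pow, hBdeg]
    · simpa only [eval_pow, eval_add, eval_X, hG, hH] using hgh x
  have hA0 : (X ^ 3 + G).coeff 0 = 0 := by simp [coeff_zero_eq_eval_zero, hG]
  have hB0 : (X ^ 5 + H).coeff 0 = 0 := by simp [coeff_zero_eq_eval_zero, hH]
  have hGzero : G = 0 :=
    add_eq_left.1 (eq_X_pow_of_pow_eq_pow_of_coprime hA hAdeg (by norm_num) hAB hA0)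
  have hHzero : H = 0 :=
    add_eq_left.1 (eq_X_pow_of_pow_eq_pow_of_coprime hB hBdeg (by norm_num) hAB.symm hB0)
  exact ⟨by ext x; simp [← hG, hGzero], by ext x; simp [← hH, hHzero]⟩

theorem additive_cubes_and_fifths_implies_id_general (hF : 32 ≤ #F) (f : F → F)
    (h3 : ∀ x y, f (x + y) ^ 3 + (x + y) ^ 3 = (f x ^ 3 + x ^ 3) + (f y ^ 3 + y ^ 3))
    (h5 : ∀ x y, f (x + y) ^ 5 + (x + y) ^ 5 = (f x ^ 5 + x ^ 5) + (f y ^ 5 + y ^ 5)) (x : F) :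
    f x = x := by
  let g : F →+ F := .mk' (fun x ↦ f x ^ 3 + x ^ 3) h3
  let h : F →+ F := .mk' (fun x ↦ f x ^ 5 + x ^ 5) h5
  have hg (x : F) : x ^ 3 + g x = f x ^ 3 := by
    rw [AddMonoidHom.mk'_apply, add_comm, CharTwo.add_cancel_right]
  have hh (x : F) : x ^ 5 + h x = f x ^ 5 := by
    rw [AddMonoidHom.mk'_apply, add_comm, CharTwo.add_cancel_right]
  obtain ⟨hg0, hh0⟩ := eq_zero_of_pow_five_eq_pow_three (g := g) (h := h)
    (lt_of_lt_of_le (by norm_num) hF) fun x ↦ by rw [hg, hh, ← pow_mul, ← pow_mul]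
  have hcube : f x ^ 3 = x ^ 3 := by simpa [hg0] using (hg x).symm
  have hfifth : f x ^ 5 = x ^ 5 := by simpa [hh0] using (hh x).symm
  calc f x = (f x ^ 3) ^ 2 / f x ^ 5 := by field_simp
    _ = (x ^ 3) ^ 2 / x ^ 5 := by rw [hcube, hfifth]
    _ = x := by field_simp

end CharTwo

/-- If `f : F_{2^n} → F_{2^n}` (`n ≥ 5` odd) is such that `x ↦ f(x)³ + x³`
and `x ↦ f(x)⁵ + x⁵` are both additive, then `f` is the identity. -/
theorem additive_cubes_and_fifths_implies_id
    (n : ℕ) (hn : 5 ≤ n) (hodd : Odd n)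
    (f : GaloisField 2 n → GaloisField 2 n)
    (h3 : ∀ x y : GaloisField 2 n,
      f (x + y) ^ 3 + (x + y) ^ 3 = (f x ^ 3 + x ^ 3) + (f y ^ 3 + y ^ 3))
    (h5 : ∀ x y : GaloisField 2 n,
      f (x + y) ^ 5 + (x + y) ^ 5 = (f x ^ 5 + x ^ 5) + (f y ^ 5 + y ^ 5)) :
    ∀ x : GaloisField 2 n, f x = x := by
  refine additive_cubes_and_fifths_implies_id_general ?_ f h3 h5
  rw [← Nat.cast_card, GaloisField.card 2 n (by lia)]
  exact_mod_cast Nat.pow_le_pow_right (n := 2) (by norm_num) hn
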